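/- (Two-move periodicity) Let u, v ∈ ℕⁿ be nonzero vectors and let SG : ℕⁿ → ℕ be the Sprague–Grundy function of the two-move vector subtraction game with moves −u and −v, i.e. SG(x) = mex of { SG(x−u) : if x−u ∈ ℕⁿ } ∪ { SG(x−v) : if x−v ∈ ℕⁿ }. Then the game is periodic in u+v: SG(x + u + v) = SG(x) for every x ∈ ℕⁿ. -/

import Mathlib

/-- The minimum excludant of a set of naturals: the least natural number not in the set. -/
noncomputable def mex (S : Set ℕ) : ℕ := sInf {n : ℕ | n ∉ S}

/-!
A move never preserves the value, so `SG x` is the value of neither option `x + u`, `x + v` of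
`x + u + v`; hence `SG (x + u + v) ≤ SG x`. If this is strict, then some option `z` of `x` has the
value `SG (x + u + v)`. Now `z + u + v` is `x + u` or `x + v`, an option of `x + u + v`, and thus
`SG (z + u + v) ≠ SG z`. So the inequality is strict at `z` as well, while `SG z < SG x`: infinite
descent on the Grundy value.
-/

theorem mex_notMem {S : Set ℕ} (hS : S.Finite) : mex S ∉ S :=
  Nat.sInf_mem hS.infinite_compl.nonempty

theorem mem_of_lt_mex {S : Set ℕ} {k : ℕ} (hk : k < mex S) : k ∈ S :=
  not_not.mp (Nat.notMem_of_lt_sInf hk)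

/-- `SG` satisfies the Sprague–Grundy recursion of the game in which the positions reachable in one
move from `x` are those in `options x`. The game is not required to terminate. -/
def IsGrundyFunction {α : Type*} (options : α → Set α) (SG : α → ℕ) : Prop :=
  ∀ x, SG x = mex (SG '' options x)

/-- The options of `x` in the game whose two moves undo `f` and undo `g`. With `f = (· + u)` and
`g = (· + v)` these are the moves `-u` and `-v`, free of truncated subtraction. -/
def twoMoveOptions {α : Type*} (f g : α → α) (x : α) : Set α :=
  f ⁻¹' {x} ∪ g ⁻¹' {x}

namespace IsGrundyFunction

variable {α : Type*} {options : α → Set α} {SG : α → ℕ} {x y : α}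

theorem ne_of_mem_options (hSG : IsGrundyFunction options SG) (hfin : (options x).Finite)
    (hy : y ∈ options x) : SG y ≠ SG x := by
  intro hyx
  have hx : SG x ∉ SG '' options x := hSG x ▸ mex_notMem (hfin.image SG)
  exact hx ⟨y, hy, hyx⟩

theorem exists_mem_options_of_lt (hSG : IsGrundyFunction options SG) {k : ℕ} (hk : k < SG x) :
    ∃ y ∈ options x, SG y = k :=
  mem_of_lt_mex (hSG x ▸ hk)

end IsGrundyFunction

section TwoMove

variable {α : Type*} {f g : α → α} {SG : α → ℕ}

theorem finite_twoMoveOptions (hf : f.Injective) (hg : g.Injective) (x : α) :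
    (twoMoveOptions f g x).Finite :=
  ((Set.finite_singleton x).preimage hf.injOn).union ((Set.finite_singleton x).preimage hg.injOn)

namespace IsGrundyFunction

theorem apply_left_ne (hSG : IsGrundyFunction (twoMoveOptions f g) SG)
    (hf : f.Injective) (hg : g.Injective) (x : α) : SG (f x) ≠ SG x :=
  (hSG.ne_of_mem_options (finite_twoMoveOptions hf hg (f x)) (Or.inl rfl)).symm

theorem apply_right_ne (hSG : IsGrundyFunction (twoMoveOptions f g) SG)
    (hf : f.Injective) (hg : g.Injective) (x : α) : SG (g x) ≠ SG x :=
  (hSG.ne_of_mem_options (finite_twoMoveOptions hf hg (g x)) (Or.inr rfl)).symm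

theorem apply_apply_le (hSG : IsGrundyFunction (twoMoveOptions f g) SG)
    (hf : f.Injective) (hg : g.Injective) (hfg : Function.Commute f g) (x : α) :
    SG (g (f x)) ≤ SG x := by
  by_contra! hlt
  obtain ⟨y, hy | hy, hyx⟩ := hSG.exists_mem_options_of_lt hlt
  · have hy_eq : y = g x := hf (hy.trans (hfg x).symm)
    exact hSG.apply_right_ne hf hg x (hy_eq ▸ hyx)
  · have hy_eq : y = f x := hg hy
    exact hSG.apply_left_ne hf hg x (hy_eq ▸ hyx)

theorem exists_lt_of_apply_apply_lt (hSG : IsGrundyFunction (twoMoveOptions f g) SG)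
    (hf : f.Injective) (hg : g.Injective) (hfg : Function.Commute f g) {x : α}
    (hx : SG (g (f x)) < SG x) : ∃ z, SG z < SG x ∧ SG (g (f z)) < SG z := by
  obtain ⟨z, hz, hzx⟩ := hSG.exists_mem_options_of_lt hx
  have hz_ne : SG (g (f z)) ≠ SG z := by
    rw [hzx]
    obtain rfl | rfl := hz
    · rw [← hfg (f z)]
      exact (hSG.apply_left_ne hf hg (g (f z))).symm
    · rw [hfg z]
      exact (hSG.apply_right_ne hf hg (g (f z))).symm
  exact ⟨z, hzx ▸ hx, (hSG.apply_apply_le hf hg hfg z).lt_of_ne hz_ne⟩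

end IsGrundyFunction

theorem two_move_periodicity_general (hSG : IsGrundyFunction (twoMoveOptions f g) SG)
    (hf : f.Injective) (hg : g.Injective) (hfg : Function.Commute f g) (x : α) :
    SG (g (f x)) = SG x := by
  refine (hSG.apply_apply_le hf hg hfg x).eq_of_not_lt ?_
  induction hk : SG x using Nat.strong_induction_on generalizing x with
  | h k ih =>
    intro hlt
    obtain ⟨z, hzx, hz⟩ := hSG.exists_lt_of_apply_apply_lt hf hg hfg (hk ▸ hlt)
    exact ih (SG z) (hk ▸ hzx) z rfl hz

end TwoMove

section Translation

variable {M : Type*} [AddCommMonoid M] [PartialOrder M] [CanonicallyOrderedAdd M]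
  [AddLeftReflectLE M] [Sub M] [OrderedSub M]

theorem preimage_add_right_singleton_eq_ite (u x : M) {_ : Decidable (u ≤ x)} :
    (· + u) ⁻¹' {x} = if u ≤ x then {x - u} else ∅ := by
  split_ifs with hux
  · ext y
    exact (eq_tsub_iff_add_eq_of_le hux).symm
  · exact Set.eq_empty_of_forall_notMem fun y hy => hux (hy ▸ le_add_self)

theorem image_twoMoveOptions_add_right (SG : M → ℕ) (u v x : M)
    {_ : Decidable (u ≤ x)} {_ : Decidable (v ≤ x)} :
    SG '' twoMoveOptions (· + u) (· + v) x =
      (if u ≤ x then {SG (x - u)} else ∅) ∪ (if v ≤ x then {SG (x - v)} else ∅) := by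
  rw [twoMoveOptions, preimage_add_right_singleton_eq_ite, preimage_add_right_singleton_eq_ite,
    Set.image_union, apply_ite (SG '' ·), apply_ite (SG '' ·)]
  simp only [Set.image_singleton, Set.image_empty]

end Translation

/-- Two-move periodicity: if `SG` is the Sprague–Grundy function of the two-move vector
subtraction game on `ℕⁿ` with moves `−u` and `−v` (for nonzero `u, v ∈ ℕⁿ`), then the
game is periodic in `u + v`: `SG(x + u + v) = SG(x)` for every `x ∈ ℕⁿ`. -/
theorem two_move_periodicity (n : ℕ) (u v : Fin n → ℕ) (hu : u ≠ 0) (hv : v ≠ 0)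
    (SG : (Fin n → ℕ) → ℕ)
    (hSG : ∀ x : Fin n → ℕ, SG x = mex
      ((if ∀ i : Fin n, u i ≤ x i then ({SG (x - u)} : Set ℕ) else ∅) ∪
       (if ∀ i : Fin n, v i ≤ x i then ({SG (x - v)} : Set ℕ) else ∅))) :
    ∀ x : Fin n → ℕ, SG (x + u + v) = SG x := by
  have hGrundy : IsGrundyFunction (twoMoveOptions (· + u) (· + v)) SG := fun x =>
    (hSG x).trans (congrArg mex (image_twoMoveOptions_add_right SG u v x).symm)
  exact two_move_periodicity_general hGrundy (add_left_injective u) (add_left_injective v)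
    fun x => add_right_comm x v u
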